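/- Let c, H, C ∈ ℝ, let I ⊆ ℝ be an open interval, and let w : ℝ → ℝ be differentiable on I with w(s) > 0 for all s ∈ I, satisfying (w'(s))² + w(s)²·(c + (H + w(s)^(−2))²) = C for all s ∈ I. Then u := w² is differentiable on I and satisfies (1/4)·(u'(s))² + (c + H²)·u(s)² − (C − 2H)·u(s) + 1 = 0 for all s ∈ I. -/

import Mathlib

theorem delaunay_ode_from_first_integral
    (c H C : ℝ) (p q : ℝ) (w : ℝ → ℝ)
    (hd : ∀ s ∈ Set.Ioo p q, DifferentiableAt ℝ w s)
    (hpos : ∀ s ∈ Set.Ioo p q, 0 < w s)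
    (hint : ∀ s ∈ Set.Ioo p q,
      (deriv w s) ^ 2 + w s ^ 2 * (c + (H + w s ^ (-(2 : ℝ))) ^ 2) = C) :
    ∀ s ∈ Set.Ioo p q, DifferentiableAt ℝ (fun s => (w s) ^ 2) s ∧
      (1 / 4) * (deriv (fun s => (w s) ^ 2) s) ^ 2
        + (c + H ^ 2) * ((w s) ^ 2) ^ 2 - (C - 2 * H) * (w s) ^ 2 + 1 = 0 := by
  intro s hs
  have h' : HasDerivAt (fun s => (w s) ^ 2) (2 * w s * deriv w s) s := by
    simpa using (hd s hs).hasDerivAt.fun_pow 2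
  refine ⟨h'.differentiableAt, ?_⟩
  rw [h'.deriv]
  have hw := hpos s hs
  have hi := hint s hs
  have hr : w s ^ (-(2 : ℝ)) = (w s ^ 2)⁻¹ := by
    rw [Real.rpow_neg hw.le, Real.rpow_two]
  rw [hr] at hi
  have hx : w s ^ 2 * (w s ^ 2)⁻¹ = 1 := mul_inv_cancel₀ (by positivity)
  generalize (w s ^ 2)⁻¹ = x at hi hx
  rw [← hi]
  linear_combination (-(2 * H * w s ^ 2) - w s ^ 2 * x - 1) * hx
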